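/- The calculus KB is sound for every threshold with respect to epistemic probability models: for every c ∈ (0,1) ∩ ℚ and every formula φ of L_KB, if KB ⊢ φ then M,w ⊨ φ in the probability semantics with threshold c, for every epistemic probability model M and every world w of M. -/

import Mathlib

open Classical

/-- An epistemic probability model: finite nonempty world set, S5 (equivalence)
accessibility relation, valuation, and a finitely additive probability measure
with full support. -/
structure EPM (W A : Type) where
  finite : Finite W
  nonempty : Nonempty W
  R : W → W → Prop
  equiv : Equivalence R
  V : W → Set A
  P : Set W → ℝ
  nonneg : ∀ X : Set W, 0 ≤ P X
  le_one : ∀ X : Set W, P X ≤ 1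
  norm : P Set.univ = 1
  add : ∀ X Y : Set W, X ∩ Y = ∅ → P (X ∪ Y) = P X + P Y
  full : ∀ w : W, 0 < P {w}

/-- The equivalence class `[w]` of a world. -/
def EPM.cl {W A : Type} (M : EPM W A) (w : W) : Set W := {v | M.R w v}

/-- `P_w(X) := P(X ∩ [w]) / P([w])`. -/
noncomputable def EPM.Pw {W A : Type} (M : EPM W A) (w : W) (X : Set W) : ℝ :=
  M.P (X ∩ M.cl w) / M.P (M.cl w)

/-- The language `L_KB`: `φ ::= ⊤ | p | ¬φ | φ∧φ | Kφ | Bφ`. -/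
inductive Form (A : Type) : Type where
  | top : Form A
  | atom : A → Form A
  | neg : Form A → Form A
  | and : Form A → Form A → Form A
  | K : Form A → Form A
  | B : Form A → Form A

namespace Form

/-- Material implication abbreviation. -/
def imp {A : Type} (φ ψ : Form A) : Form A := Form.neg (Form.and φ (Form.neg ψ))

/-- Disjunction abbreviation. -/
def or {A : Type} (φ ψ : Form A) : Form A := Form.neg (Form.and (Form.neg φ) (Form.neg ψ))

/-- Falsehood `⊥ := ¬⊤`. -/
def bot {A : Type} : Form A := Form.neg Form.top

/-- Biconditional abbreviation. -/
def iff {A : Type} (φ ψ : Form A) : Form A := Form.and (Form.imp φ ψ) (Form.imp ψ φ)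

end Form

/-- Truth set of a formula in an epistemic probability model, for threshold `c`:
`Kφ` holds at `w` iff `P_w(⟦φ⟧) = 1`, and `Bφ` holds at `w` iff `P_w(⟦φ⟧) > c`. -/
noncomputable def psem {W A : Type} (c : ℝ) (M : EPM W A) : Form A → Set W
  | Form.top => Set.univ
  | Form.atom p => {w | p ∈ M.V w}
  | Form.neg φ => (psem c M φ)ᶜ
  | Form.and φ ψ => psem c M φ ∩ psem c M ψ
  | Form.K φ => {w | M.Pw w (psem c M φ) = 1}
  | Form.B φ => {w | c < M.Pw w (psem c M φ)}

/-- Boolean evaluation of a formula under a valuation of "atomic" formulas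
(propositional letters and formulas of the form `Kφ` or `Bφ`). -/
def evalb {A : Type} (v : Form A → Bool) : Form A → Bool
  | Form.top => true
  | Form.atom p => v (Form.atom p)
  | Form.neg φ => !(evalb v φ)
  | Form.and φ ψ => evalb v φ && evalb v ψ
  | Form.K φ => v (Form.K φ)
  | Form.B φ => v (Form.B φ)

/-- `φ` is a propositional tautology (treating `Kψ` and `Bψ` as atoms). -/
def Taut {A : Type} (φ : Form A) : Prop := ∀ v : Form A → Bool, evalb v φ = true

/-- The Hilbert calculus `KB`. -/
inductive KB {A : Type} : Form A → Prop where
  | taut {φ : Form A} : Taut φ → KB φ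
  | kdist (φ ψ : Form A) :
      KB (Form.imp (Form.K (Form.imp φ ψ)) (Form.imp (Form.K φ) (Form.K ψ)))
  | kt (φ : Form A) : KB (Form.imp (Form.K φ) φ)
  | k4 (φ : Form A) : KB (Form.imp (Form.K φ) (Form.K (Form.K φ)))
  | k5 (φ : Form A) : KB (Form.imp (Form.neg (Form.K φ)) (Form.K (Form.neg (Form.K φ))))
  | bf : KB (Form.neg (Form.B (Form.bot)))
  | bn : KB (Form.B Form.top)
  | ap (φ : Form A) : KB (Form.imp (Form.B φ) (Form.K (Form.B φ)))
  | an (φ : Form A) : KB (Form.imp (Form.neg (Form.B φ)) (Form.K (Form.neg (Form.B φ))))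
  | kbm (φ ψ : Form A) :
      KB (Form.imp (Form.K (Form.imp φ ψ)) (Form.imp (Form.B φ) (Form.B ψ)))
  | mp {φ ψ : Form A} : KB (Form.imp φ ψ) → KB φ → KB ψ
  | nec {φ : Form A} : KB φ → KB (Form.K φ)

/-!
By additivity and full support, `P` is strictly monotone, so `P_w(X) = 1` holds exactly when
`[w] ⊆ X`: the modality `K` is the S5 box of the relation `R`. As `P_w` depends on `w` only
through `[w]`, the truth sets of `Kφ` and `Bφ`, and their complements, are unions of information
cells, on which introspection is automatic. The axiom (KBM) is monotonicity of `P_w`, while (BF)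
and (N) are `P_w(∅) = 0 ≤ c` and `c < 1 = P_w(W)`. Tautologies hold because truth at `w` is itself a
Boolean valuation.
-/

namespace EPM

variable {W A : Type} (M : EPM W A)

theorem P_empty : M.P ∅ = 0 := by
  simpa using M.add ∅ ∅ (Set.empty_inter ∅)

theorem P_add_P_sdiff {X Y : Set W} (h : X ⊆ Y) : M.P X + M.P (Y \ X) = M.P Y := by
  rw [← M.add X (Y \ X) (Set.inter_sdiff_self X Y), Set.union_sdiff_cancel h]

theorem monotone_P : Monotone M.P := fun X Y h => by
  linarith [M.P_add_P_sdiff h, M.nonneg (Y \ X)]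

theorem P_pos {X : Set W} (h : X.Nonempty) : 0 < M.P X := by
  obtain ⟨w, hw⟩ := h
  exact (M.full w).trans_le (M.monotone_P (Set.singleton_subset_iff.2 hw))

theorem strictMono_P : StrictMono M.P := fun X Y h => by
  linarith [M.P_add_P_sdiff h.subset, M.P_pos (Set.nonempty_of_ssubset h)]

theorem mem_cl_self (w : W) : w ∈ M.cl w :=
  M.equiv.refl w

variable {M} in
theorem mem_cl_symm {v w : W} (h : v ∈ M.cl w) : w ∈ M.cl v :=
  M.equiv.symm h

variable {M} in
theorem cl_eq_of_mem {v w : W} (h : v ∈ M.cl w) : M.cl v = M.cl w :=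
  Set.ext fun _ => ⟨M.equiv.trans h, M.equiv.trans (mem_cl_symm h)⟩

theorem P_cl_pos (w : W) : 0 < M.P (M.cl w) :=
  M.P_pos ⟨w, M.mem_cl_self w⟩

theorem Pw_empty (w : W) : M.Pw w ∅ = 0 := by
  rw [Pw, Set.empty_inter, P_empty, zero_div]

theorem Pw_eq_one_iff {w : W} {X : Set W} : M.Pw w X = 1 ↔ M.cl w ⊆ X := by
  rw [Pw, div_eq_one_iff_eq (M.P_cl_pos w).ne', ← Set.inter_eq_right]
  refine ⟨fun h => ?_, congrArg M.P⟩
  by_contra hne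
  exact (M.strictMono_P (Set.inter_subset_right.ssubset_of_ne hne)).ne h

theorem Pw_univ (w : W) : M.Pw w Set.univ = 1 :=
  M.Pw_eq_one_iff.2 (Set.subset_univ _)

theorem Pw_mono_of_inter_cl_subset {w : W} {X Y : Set W} (h : X ∩ M.cl w ⊆ Y) :
    M.Pw w X ≤ M.Pw w Y :=
  div_le_div_of_nonneg_right (M.monotone_P (Set.subset_inter h Set.inter_subset_right))
    (M.P_cl_pos w).le

variable {M} in
theorem Pw_congr_of_mem_cl {v w : W} (h : v ∈ M.cl w) (X : Set W) : M.Pw v X = M.Pw w X := by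
  rw [Pw, Pw, cl_eq_of_mem h]

/-- `X` is a union of information cells, so whether `w ∈ X` is known at every world `w`. -/
def IsSaturated (X : Set W) : Prop :=
  ∀ ⦃w⦄, w ∈ X → M.cl w ⊆ X

variable {M} in
theorem IsSaturated.compl {X : Set W} (h : M.IsSaturated X) : M.IsSaturated Xᶜ :=
  fun _ hw _ hv hvX => hw (h hvX (mem_cl_symm hv))

theorem isSaturated_setOf_Pw (X : Set W) (p : ℝ → Prop) : M.IsSaturated {w | p (M.Pw w X)} :=
  fun _ hw _ hv => (congrArg p (Pw_congr_of_mem_cl hv X)).mpr hw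

end EPM

section Semantics

variable {W A : Type} {c : ℝ} {M : EPM W A} {w : W} {φ ψ : Form A}

theorem mem_psem_imp : w ∈ psem c M (φ.imp ψ) ↔ (w ∈ psem c M φ → w ∈ psem c M ψ) := by
  simp [Form.imp, psem]

theorem psem_bot : psem c M Form.bot = ∅ :=
  Set.compl_univ

theorem mem_psem_K : w ∈ psem c M φ.K ↔ M.cl w ⊆ psem c M φ :=
  M.Pw_eq_one_iff

theorem isSaturated_psem_K : M.IsSaturated (psem c M φ.K) :=
  M.isSaturated_setOf_Pw _ (· = 1)

theorem isSaturated_psem_B : M.IsSaturated (psem c M φ.B) :=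
  M.isSaturated_setOf_Pw _ (c < ·)

theorem mem_psem_imp_K_of_isSaturated (h : M.IsSaturated (psem c M φ)) :
    w ∈ psem c M (φ.imp φ.K) :=
  mem_psem_imp.2 fun hw => mem_psem_K.2 (h hw)

theorem mem_psem_K_imp_distrib : w ∈ psem c M ((φ.imp ψ).K.imp (φ.K.imp ψ.K)) := by
  simp only [mem_psem_imp, mem_psem_K]
  exact fun himp hφ v hv => mem_psem_imp.1 (himp hv) (hφ hv)

theorem mem_psem_K_imp_self : w ∈ psem c M (φ.K.imp φ) :=
  mem_psem_imp.2 fun hK => mem_psem_K.1 hK (M.mem_cl_self w)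

theorem mem_psem_K_imp_B_imp_B : w ∈ psem c M ((φ.imp ψ).K.imp (φ.B.imp ψ.B)) := by
  simp only [mem_psem_imp, mem_psem_K]
  intro himp hB
  exact lt_of_lt_of_le hB <|
    M.Pw_mono_of_inter_cl_subset fun v hv => mem_psem_imp.1 (himp hv.2) hv.1

theorem mem_psem_neg_B_bot (hc : 0 ≤ c) : w ∈ psem c M (Form.neg (Form.B Form.bot)) := by
  change ¬ c < M.Pw w (psem c M Form.bot)
  rwa [psem_bot, M.Pw_empty, not_lt]

theorem mem_psem_B_top (hc : c < 1) : w ∈ psem c M (Form.B Form.top) :=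
  hc.trans_eq (M.Pw_univ w).symm

theorem evalb_decide_mem_psem :
    evalb (fun ψ => decide (w ∈ psem c M ψ)) φ = true ↔ w ∈ psem c M φ := by
  induction φ with
  | top => simp [evalb, psem]
  | atom p => simp [evalb]
  | neg φ ih => simp [evalb, psem, ← ih]
  | and φ ψ ihφ ihψ => simp [evalb, psem, ← ihφ, ← ihψ]
  | K φ => simp [evalb]
  | B φ => simp [evalb]

theorem Taut.mem_psem (h : Taut φ) : w ∈ psem c M φ :=
  evalb_decide_mem_psem.1 (h _)

end Semantics

theorem KB_probability_soundness_general {A : Type} {c : ℝ} (hc0 : 0 ≤ c) (hc1 : c < 1)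
    {φ : Form A} (h : KB φ) {W : Type} (M : EPM W A) (w : W) : w ∈ psem c M φ := by
  induction h generalizing w with
  | taut h => exact h.mem_psem
  | kdist φ ψ => exact mem_psem_K_imp_distrib
  | kt φ => exact mem_psem_K_imp_self
  | k4 φ => exact mem_psem_imp_K_of_isSaturated isSaturated_psem_K
  | k5 φ => exact mem_psem_imp_K_of_isSaturated isSaturated_psem_K.compl
  | bf => exact mem_psem_neg_B_bot hc0
  | bn => exact mem_psem_B_top hc1
  | ap φ => exact mem_psem_imp_K_of_isSaturated isSaturated_psem_B
  | an φ => exact mem_psem_imp_K_of_isSaturated isSaturated_psem_B.compl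
  | kbm φ ψ => exact mem_psem_K_imp_B_imp_B
  | mp _ _ ih_imp ih => exact mem_psem_imp.1 (ih_imp w) (ih w)
  | nec _ ih => exact mem_psem_K.2 fun v _ => ih v

/-- `KB` is sound for every threshold `c ∈ (0,1) ∩ ℚ` with respect to the class of
epistemic probability models. -/
theorem KB_probability_soundness {A : Type} (c : ℚ) (hc0 : 0 < c) (hc1 : c < 1)
    (φ : Form A) (h : KB φ) :
    ∀ (W : Type) (M : EPM W A) (w : W), w ∈ psem (c : ℝ) M φ :=
  fun _ M w => KB_probability_soundness_general
    (by exact_mod_cast hc0.le) (by exact_mod_cast hc1) h M w
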